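/- The polynomial p(x) = x⁸ − 3x⁷ + 5x⁶ − 3x⁵ + 2x⁴ + 2x³ + 2x + 1 is irreducible over ℚ; the number field K = ℚ[x]/(p(x)) has discriminant 156166337, which is a prime number; and the ring of integers of K equals ℤ[t], where t denotes the image of x in K. -/

import Mathlib

open Polynomial

/-- The polynomial `p(x) = x⁸ − 3x⁷ + 5x⁶ − 3x⁵ + 2x⁴ + 2x³ + 2x + 1` over `ℚ`. -/
noncomputable def pK : ℚ[X] :=
  X ^ 8 - 3 * X ^ 7 + 5 * X ^ 6 - 3 * X ^ 5 + 2 * X ^ 4 + 2 * X ^ 3 + 2 * X + 1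

/-!
Irreducibility is tested modulo 3: a polynomial of degree 8 over `𝔽₃` is irreducible as soon as it
is coprime to `X ^ 3 ^ d - X` for `1 ≤ d ≤ 4`, and `d = 3, 4` suffice since `X ^ 3 ^ d - X` divides
`X ^ 3 ^ 4 - X` for `d ∣ 4`.

The discriminant of `1, t, …, t⁷` is, up to sign, the norm of `p'(t)`, that is, the determinant of
multiplication by `p'(t)`. It equals `[𝓞 K : ℤ[t]]² * discr K`; being prime, it is squarefree, which
forces the index to be 1.
-/

section Irreducibility

variable {R F : Type*} [CommRing R] [Field F]

theorem isUnit_adjoinRoot_mk_iff_isCoprime {p f : R[X]} :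
    IsUnit (AdjoinRoot.mk p f) ↔ IsCoprime p f := by
  rw [isUnit_iff_exists_inv]
  constructor
  · rintro ⟨b, hb⟩
    obtain ⟨v, rfl⟩ := AdjoinRoot.mk_surjective b
    rw [← map_mul, ← map_one (AdjoinRoot.mk p), AdjoinRoot.mk_eq_mk] at hb
    obtain ⟨u, hu⟩ := hb
    exact ⟨-u, v, by linear_combination hu⟩
  · rintro ⟨u, v, huv⟩
    refine ⟨AdjoinRoot.mk p v, ?_⟩
    rw [← map_mul, ← map_one (AdjoinRoot.mk p), AdjoinRoot.mk_eq_mk]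
    exact ⟨-u, by linear_combination huv⟩

/-- Ben-Or's irreducibility test. -/
theorem irreducible_of_forall_isCoprime_X_pow_card_pow_sub_X [Finite F] {p : F[X]} (hp : p.Monic)
    (hp1 : p ≠ 1)
    (h : ∀ d ∈ Finset.Ioc 0 (p.natDegree / 2), IsCoprime p (X ^ Nat.card F ^ d - X)) :
    Irreducible p := by
  refine (hp.irreducible_iff_lt_natDegree_lt hp1).2 fun q hq hdeg hqp ↦ ?_
  rw [Finset.mem_Ioc] at hdeg
  have hq_unit : ¬ IsUnit q := fun hu ↦ hdeg.1.ne' (natDegree_eq_zero_of_isUnit hu)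
  obtain ⟨f, hf, hfq⟩ := WfDvdMonoid.exists_irreducible_factor hq_unit hq.ne_zero
  have hf_mem : f.natDegree ∈ Finset.Ioc 0 (p.natDegree / 2) :=
    Finset.mem_Ioc.2 ⟨hf.natDegree_pos, (natDegree_le_of_dvd hfq hq.ne_zero).trans hdeg.2⟩
  have hfX : f ∣ X ^ Nat.card F ^ f.natDegree - X :=
    hf.natDegree_dvd_iff_dvd_X_pow_card_pow_sub_X.1 dvd_rfl
  exact hf.not_isUnit ((h _ hf_mem).isUnit_of_dvd' (hfq.trans hqp) hfX)

end Irreducibility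

section Discriminant

open NumberField

variable {R A ι : Type*} [CommRing R] [CommRing A] [Algebra R A] [Fintype ι] [DecidableEq ι]

theorem discr_eq_det_sq_mul_discr (B : Module.Basis ι R A) (v : ι → A) :
    Algebra.discr R v = B.det v ^ 2 * Algebra.discr R B := by
  rw [Module.Basis.det_apply, ← Algebra.discr_of_matrix_vecMul, B.toMatrix_map_vecMul]

theorem isUnit_det_of_squarefree_discr (B : Module.Basis ι R A) {v : ι → A}
    (hv : Squarefree (Algebra.discr R v)) : IsUnit (B.det v) :=
  hv _ ⟨Algebra.discr R B, by rw [discr_eq_det_sq_mul_discr B, sq]⟩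

variable {K : Type*} [Field K] [NumberField K]

theorem coe_discr_int (v : ι → 𝓞 K) :
    (Algebra.discr ℤ v : ℚ) = Algebra.discr ℚ fun i ↦ (v i : K) := by
  rw [Algebra.discr_def, Algebra.discr_def, ← eq_intCast (algebraMap ℤ ℚ), RingHom.map_det]
  congr 1
  ext i j
  simp [Algebra.traceMatrix_apply, Algebra.traceForm_apply, Algebra.coe_trace_int]

theorem exists_basis_eq_of_squarefree_discr {v : ι → 𝓞 K}
    (hcard : Fintype.card ι = Module.finrank ℚ K) (hv : Squarefree (Algebra.discr ℤ v)) :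
    ∃ b : Module.Basis ι ℤ (𝓞 K), ⇑b = v := by
  have hrank : Module.finrank ℤ (𝓞 K) = Fintype.card ι := by
    rw [RingOfIntegers.rank, hcard]
  let B : Module.Basis ι ℤ (𝓞 K) :=
    (Module.finBasisOfFinrankEq ℤ (𝓞 K) hrank).reindex (Fintype.equivFin ι).symm
  obtain ⟨hli, hspan⟩ := (Module.Basis.is_basis_iff_det B).2 (isUnit_det_of_squarefree_discr B hv)
  exact ⟨.mk hli hspan.ge, Module.Basis.coe_mk ..⟩

theorem discr_eq_and_adjoin_eq_top_of_squarefree (pb : PowerBasis ℚ K) {t : 𝓞 K}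
    (hgen : pb.gen = t) {D : ℤ} (hD : Algebra.discr ℚ pb.basis = D) (hsq : Squarefree D) :
    NumberField.discr K = D ∧ Algebra.adjoin ℤ {t} = ⊤ := by
  have hdiscr : Algebra.discr ℤ (fun i : Fin pb.dim ↦ t ^ (i : ℕ)) = D := by
    rw [← Int.cast_inj (α := ℚ), coe_discr_int, ← hD, pb.coe_basis, hgen]
    simp only [map_pow]
  obtain ⟨b, hb⟩ := exists_basis_eq_of_squarefree_discr
    (by rw [Fintype.card_fin, pb.finrank]) (hdiscr ▸ hsq)
  refine ⟨by rw [← discr_eq_discr K b, hb, hdiscr], ?_⟩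
  rw [← Algebra.toSubmodule_eq_top, eq_top_iff, ← b.span_eq, Submodule.span_le, hb]
  rintro _ ⟨i, rfl⟩
  exact pow_mem (Algebra.self_mem_adjoin_singleton ℤ t) _

end Discriminant

theorem det_eq_of_isLowerTriangular_of_isUpperTriangular_mul {R m : Type*} [CommRing R] [IsDomain R]
    [Fintype m] [LinearOrder m] {L M : Matrix m m R} {d : R} (hL : L.IsLowerTriangular)
    (hLM : (L * M).IsUpperTriangular) (hL0 : ∀ i, L i i ≠ 0)
    (hd : ∏ i, (L * M) i i = (∏ i, L i i) * d) : M.det = d := by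
  have hprod : ∏ i, L i i ≠ 0 := Finset.prod_ne_zero_iff.2 fun i _ ↦ hL0 i
  refine mul_left_cancel₀ hprod ?_
  rw [← hd, ← Matrix.det_of_isUpperTriangular hLM, Matrix.det_mul,
    Matrix.det_of_isLowerTriangular L hL]

/-- The integral model of `pK`, used to reduce modulo 3 and to compute over any base ring. -/
noncomputable def pInt : ℤ[X] :=
  X ^ 8 - 3 * X ^ 7 + 5 * X ^ 6 - 3 * X ^ 5 + 2 * X ^ 4 + 2 * X ^ 3 + 2 * X + 1

theorem pInt_map_rat : pInt.map (algebraMap ℤ ℚ) = pK := by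
  simp [pInt, pK]

theorem natDegree_pInt : pInt.natDegree = 8 := by
  unfold pInt; compute_degree!

theorem monic_pInt : pInt.Monic := by
  unfold pInt; monicity!

theorem aeval_pInt {R : Type*} [CommRing R] (a : R) :
    aeval a pInt =
      a ^ 8 - 3 * a ^ 7 + 5 * a ^ 6 - 3 * a ^ 5 + 2 * a ^ 4 + 2 * a ^ 3 + 2 * a + 1 := by
  simp [pInt, aeval_def, eval₂_ofNat]

section ModThree

variable {R : Type*} [CommRing R] [CharP R 3] {a : R}

theorem pow_27_of_aeval_pInt (ha : aeval a pInt = 0) :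
    a ^ 27 = -a ^ 7 - a ^ 6 - a ^ 4 + a ^ 3 - a ^ 2 - a := by
  rw [aeval_pInt] at ha
  grind

theorem pow_81_of_aeval_pInt (ha : aeval a pInt = 0) :
    a ^ 81 = a ^ 6 - a ^ 4 + a ^ 2 + 1 := by
  have h27 := pow_27_of_aeval_pInt ha
  rw [aeval_pInt] at ha
  grind

theorem isUnit_pow_27_sub_of_aeval_pInt (ha : aeval a pInt = 0) : IsUnit (a ^ 27 - a) := by
  -- The inverse comes from the extended Euclidean algorithm over `𝔽₃`.
  refine .of_mul_eq_one (-a ^ 7 + a ^ 6 - a ^ 5 - a ^ 4 - a ^ 2 - a) ?_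
  rw [pow_27_of_aeval_pInt ha]
  rw [aeval_pInt] at ha
  grind

theorem isUnit_pow_81_sub_of_aeval_pInt (ha : aeval a pInt = 0) : IsUnit (a ^ 81 - a) := by
  refine .of_mul_eq_one (a ^ 7 - a ^ 6 - a ^ 4 - a ^ 2 + 1) ?_
  rw [pow_81_of_aeval_pInt ha]
  rw [aeval_pInt] at ha
  grind

theorem irreducible_pInt_map_zmod_three : Irreducible (pInt.map (Int.castRingHom (ZMod 3))) := by
  set p := pInt.map (Int.castRingHom (ZMod 3))
  have hdeg : p.natDegree = 8 := by rw [monic_pInt.natDegree_map, natDegree_pInt]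
  have hp1 : p ≠ 1 := fun h ↦ by simp [h] at hdeg
  have : CharP (AdjoinRoot p) 3 := charP_of_injective_algebraMap
    (AdjoinRoot.of.injective_of_degree_ne_zero (by
      rw [degree_eq_natDegree (monic_pInt.map _).ne_zero, hdeg]; norm_num)) 3
  have hroot : aeval (AdjoinRoot.root p) pInt = 0 := by
    rw [← aeval_map_algebraMap (ZMod 3)]
    exact AdjoinRoot.aeval_eq p ▸ AdjoinRoot.mk_self
  have hcop3 : IsCoprime p (X ^ 3 ^ 3 - X) := isUnit_adjoinRoot_mk_iff_isCoprime.1 <| by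
    simpa using isUnit_pow_27_sub_of_aeval_pInt hroot
  have hcop4 : IsCoprime p (X ^ 3 ^ 4 - X) := isUnit_adjoinRoot_mk_iff_isCoprime.1 <| by
    simpa using isUnit_pow_81_sub_of_aeval_pInt hroot
  refine irreducible_of_forall_isCoprime_X_pow_card_pow_sub_X (monic_pInt.map _) hp1 fun d hd ↦ ?_
  rw [hdeg, Finset.mem_Ioc] at hd
  rw [Nat.card_zmod]
  obtain rfl | hd4 : d = 3 ∨ d ∣ 4 := by
    obtain ⟨hd0, hd4⟩ := hd
    interval_cases d <;> decide
  · exact hcop3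
  · exact hcop4.of_isCoprime_of_dvd_right (dvd_pow_pow_sub_self_of_dvd hd4)

end ModThree

theorem irreducible_pK : Irreducible pK := by
  rw [← pInt_map_rat, ← monic_pInt.irreducible_iff_irreducible_map_fraction_map]
  exact monic_pInt.irreducible_of_irreducible_map _ _ irreducible_pInt_map_zmod_three

section Norm

/-- The matrix of multiplication by `p'(t)` in the basis `1, t, …, t⁷` of `ℤ[x]/(p)`. -/
def derivMatrix : Matrix (Fin 8) (Fin 8) ℤ :=
  !![2, -8, -3, 1, 9, 21, 37, 37;
    0, -14, -14, -1, 19, 51, 95, 111;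
    6, 0, -14, -14, -1, 19, 51, 95;
    8, -10, -6, -12, 4, 41, 93, 125;
    -15, -8, -16, -4, 6, 46, 115, 167;
    30, 9, 1, -19, -31, -57, -65, 4;
    -21, -10, -6, 6, 26, 74, 128, 120;
    8, 3, -1, -9, -21, -37, -37, 17]

/-- The row operations of a fraction-free Gaussian elimination: multiplying `derivMatrix` by this
matrix on the left makes it upper triangular. -/
def derivMatrixElim : Matrix (Fin 8) (Fin 8) ℤ :=
  !![1, 0, 0, 0, 0, 0, 0, 0;
    0, 1, 0, 0, 0, 0, 0, 0;
    -21, 12, 7, 0, 0, 0, 0, 0;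
    -476, 127, -112, 203, 0, 0, 0, 0;
    23254, -11872, 5385, -4336, 2942, 0, 0, 0;
    -913428, 475622, -270872, 153561, -62804, 42718, 0, 0;
    4323184, -2023752, 896938, -1205548, 330429, 649274, 900257, 0;
    -79649820, 45415856, -20319480, 8983622, -14194436, 2533563, 8497390, 12358663]

theorem det_derivMatrix : derivMatrix.det = 156166337 := by
  have hlower : derivMatrixElim.IsLowerTriangular := by
    have h : ∀ ij : Fin 8 × Fin 8, ij.1 < ij.2 → derivMatrixElim ij.1 ij.2 = 0 := by
      decide +kernel
    exact fun i j hij ↦ h (i, j) hij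
  have hupper : (derivMatrixElim * derivMatrix).IsUpperTriangular := by
    have h : ∀ ij : Fin 8 × Fin 8, ij.2 < ij.1 →
        (derivMatrixElim * derivMatrix) ij.1 ij.2 = 0 := by
      decide +kernel
    exact fun i j hij ↦ h (i, j) hij
  exact det_eq_of_isLowerTriangular_of_isUpperTriangular_mul hlower hupper
    (by decide +kernel) (by decide +kernel)

variable {R S : Type*} [CommRing R] [CommRing S] [Algebra R S] {s : S}

theorem aeval_derivative_pInt_mul_pow (hs : aeval s pInt = 0) (j : Fin 8) :
    aeval s (derivative pInt) * s ^ (j : ℕ) = ∑ i, (derivMatrix i j : S) * s ^ (i : ℕ) := by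
  have hderiv : aeval s (derivative pInt) = 8 * s ^ 7 - 21 * s ^ 6 + 30 * s ^ 5 - 15 * s ^ 4 +
      8 * s ^ 3 + 6 * s ^ 2 + 2 := by
    simp only [pInt, map_add, map_sub, map_mul, map_pow, map_natCast, map_ofNat, map_zero, map_one,
      derivative_mul, derivative_X_pow, derivative_X, derivative_ofNat, derivative_one, aeval_X]
    ring
  rw [aeval_pInt] at hs
  rw [hderiv]
  simp only [Fin.sum_univ_eight, Fin.coe_ofNat_eq_mod, Nat.reduceMod, derivMatrix]
  fin_cases j <;>
    simp only [Fin.reduceFinMk, Fin.zero_eta, Fin.mk_one, Matrix.of_apply, Matrix.cons_val',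
      Matrix.cons_val, Matrix.cons_val_fin_one] <;>
    grind

theorem leftMulMatrix_aeval_derivative_pInt (b : Module.Basis (Fin 8) R S)
    (hb : ∀ i, b i = s ^ (i : ℕ)) (hs : aeval s pInt = 0) :
    Algebra.leftMulMatrix b (aeval s (derivative pInt)) = derivMatrix.map (Int.castRingHom R) := by
  ext i j
  have hcol : aeval s (derivative pInt) * b j = ∑ i, (derivMatrix i j : R) • b i := by
    simp only [hb, Algebra.smul_def, map_intCast, aeval_derivative_pInt_mul_pow hs]
  rw [Algebra.leftMulMatrix_eq_repr_mul, hcol, b.repr_sum_self, Matrix.map_apply, eq_intCast]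

theorem norm_aeval_derivative_pInt (b : Module.Basis (Fin 8) R S)
    (hb : ∀ i, b i = s ^ (i : ℕ)) (hs : aeval s pInt = 0) :
    Algebra.norm R (aeval s (derivative pInt)) = 156166337 := by
  rw [Algebra.norm_eq_matrix_det b, leftMulMatrix_aeval_derivative_pInt b hb hs,
    ← RingHom.mapMatrix_apply, ← RingHom.map_det, det_derivMatrix, map_ofNat]

end Norm

theorem discr_basis_of_aeval_gen_pK {K : Type*} [Field K] [Algebra ℚ K]
    (pb : PowerBasis ℚ K) (hgen : aeval pb.gen pK = 0) :
    Algebra.discr ℚ pb.basis = 156166337 := by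
  have hmin : minpoly ℚ pb.gen = pInt.map (algebraMap ℤ ℚ) := by
    rw [pInt_map_rat]
    exact (minpoly.eq_of_irreducible_of_monic irreducible_pK hgen
      (pInt_map_rat ▸ monic_pInt.map _)).symm
  have hdim : pb.dim = 8 := by
    rw [← pb.natDegree_minpoly, hmin, monic_pInt.natDegree_map, natDegree_pInt]
  have hroot : aeval pb.gen pInt = 0 := by
    rwa [← aeval_map_algebraMap ℚ, pInt_map_rat]
  have hnorm : Algebra.norm ℚ (aeval pb.gen (derivative pInt)) = 156166337 :=
    norm_aeval_derivative_pInt (pb.basis.reindex (finCongr hdim)) (by simp) hroot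
  have : FiniteDimensional ℚ K := pb.finite
  rw [Algebra.discr_powerBasis_eq_norm, pb.finrank, hdim, hmin, derivative_map,
    aeval_map_algebraMap, hnorm]
  norm_num

/-- The polynomial `p(x)` is irreducible over `ℚ`; the number field
`K = ℚ[x]/(p(x))` (i.e. any number field generated over `ℚ` by a root `t` of `p`)
has discriminant `156166337`, which is prime; and the ring of integers of `K`
equals `ℤ[t]`. -/
theorem stmt_11 :
    Irreducible pK ∧ Nat.Prime 156166337 ∧
    ∀ (K : Type) [Field K] [NumberField K] (t : NumberField.RingOfIntegers K),
      aeval (algebraMap (NumberField.RingOfIntegers K) K t) pK = 0 →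
      Algebra.adjoin ℚ {algebraMap (NumberField.RingOfIntegers K) K t} = ⊤ →
      (NumberField.discr K = 156166337 ∧
        Algebra.adjoin ℤ ({t} : Set (NumberField.RingOfIntegers K)) = ⊤) := by
  have hprime : Nat.Prime 156166337 := by norm_num
  refine ⟨irreducible_pK, hprime, fun K _ _ t ht hadj ↦ ?_⟩
  let pb : PowerBasis ℚ K := .ofAdjoinEqTop (Algebra.IsIntegral.isIntegral _) hadj
  have hgen : pb.gen = algebraMap _ K t := PowerBasis.ofAdjoinEqTop_gen _ _
  have hdiscr : Algebra.discr ℚ pb.basis = (156166337 : ℤ) :=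
    discr_basis_of_aeval_gen_pK pb (hgen ▸ ht)
  have hsq : Squarefree (156166337 : ℤ) :=
    (Nat.prime_iff_prime_int.1 hprime).irreducible.squarefree
  exact discr_eq_and_adjoin_eq_top_of_squarefree pb hgen hdiscr hsq
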